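/- arXiv:2205.01978 — 2 statements merged into one kernel-verified Lean document; each statement's English description precedes it below -/
import Mathlib

section
/- Let k ≥ 3 be an integer. The polynomial p_k = Σ_{i=1}^{k} (x_1 ⋯ x̂_i ⋯ x_k)^{p−1} is irreducible in the polynomial ring F[x_1,…,x_k]. -/
/-!
Write `d = p - 1`. Singling out the variable `x_0` gives `p_{m+1} = p_m x_0^d + B` with
`B = (x_1 ⋯ x_m)^d`, viewed as a polynomial in `x_0` over `F[x_1, …, x_m]`. Its reverse
`B x_0^d + p_m` is irreducible by Eisenstein's criterion at *any* irreducible factor `q` of `p_m`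
(which exists when `m ≥ 2`, since `p_m` is then neither zero nor a unit). The hypotheses of the
criterion hold because

* no variable divides `p_m`, hence `q ∤ B` (`not_dvd_X`, `not_dvd_prod`);
* `p_m` is squarefree (`not_sq_dvd`): a repeated factor would divide `x_i ∂_i p_m = d (p_m - B_i)`,
  where `B_i` is the product of the `x_j^d` with `j ≠ i`; as `d = -1` is invertible in `F`, it would
  divide `B_i`, contradicting the previous point.

Reversing a polynomial with nonzero constant term preserves irreducibility
(`irreducible_of_irreducible_reverse`), which concludes.
-/

noncomputable section

/-- The polynomial `p_k = ∑_{i=1}^k (x_1 ⋯ x̂_i ⋯ x_k)^{p-1}`. -/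
def pk (F : Type) [Field F] (p k : ℕ) : MvPolynomial (Fin k) F :=
  ∑ i : Fin k, ∏ j ∈ Finset.univ.erase i, (MvPolynomial.X j) ^ (p - 1)

open MvPolynomial in
/-- At the point whose only zero coordinate is the `j`-th, the other coordinates being `1`, only the
`j`-th summand of `p_m` survives. -/
lemma eval_pk_update (F : Type) [Field F] (p m : ℕ) [Fact p.Prime] (j : Fin m) :
    eval (Function.update (fun _ => (1 : F)) j 0) (pk F p m) = 1 := by
  have hd : p - 1 ≠ 0 := by have := (Fact.out : p.Prime).two_le; omega
  rw [pk, map_sum, Finset.sum_eq_single j]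
  · rw [map_prod]
    refine Finset.prod_eq_one fun l hl => ?_
    simp [Function.update_of_ne (Finset.ne_of_mem_erase hl)]
  · intro i _ hij
    rw [map_prod]
    exact Finset.prod_eq_zero (Finset.mem_erase.2 ⟨hij.symm, Finset.mem_univ j⟩) (by simp [hd])
  · simp

lemma pk_ne_zero (F : Type) [Field F] (p m : ℕ) [Fact p.Prime] (j : Fin m) : pk F p m ≠ 0 := by
  intro h
  have := eval_pk_update F p m j
  simp [h] at this

/-- Otherwise `q` would be associated to `x_j`, and `p_m` would vanish wherever `x_j` does, against
`eval_pk_update`. -/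
lemma not_dvd_X (F : Type) [Field F] (p m : ℕ) [Fact p.Prime] {q : MvPolynomial (Fin m) F}
    (hq : Irreducible q) (hqp : q ∣ pk F p m) (j : Fin m) : ¬ q ∣ MvPolynomial.X j := by
  intro h
  have hX : Irreducible (MvPolynomial.X j : MvPolynomial (Fin m) F) :=
    MvPolynomial.X_prime.irreducible
  obtain ⟨c, hc⟩ := ((hq.associated_of_dvd hX h).symm.dvd).trans hqp
  have := eval_pk_update F p m j
  simp [hc] at this

lemma not_dvd_prod (F : Type) [Field F] (p m : ℕ) [Fact p.Prime] {q : MvPolynomial (Fin m) F}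
    (hq : Irreducible q) (hqp : q ∣ pk F p m) (s : Finset (Fin m)) :
    ¬ q ∣ ∏ j ∈ s, MvPolynomial.X j ^ (p - 1) := by
  intro h
  obtain ⟨j, -, hj⟩ := (hq.prime.dvd_finsetProd_iff _).1 h
  exact not_dvd_X F p m hq hqp j (hq.prime.dvd_of_dvd_pow hj)

open MvPolynomial in
/-- Euler's identity in the single variable `x_i`, in which every summand of `p_m` except the `i`-th
is homogeneous of degree `p - 1`, while the `i`-th does not involve it. -/
lemma X_mul_pderiv_pk (F : Type) [Field F] (p m : ℕ) (i : Fin m) :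
    X i * pderiv i (pk F p m) =
      (p - 1) • (pk F p m - ∏ j ∈ Finset.univ.erase i, X j ^ (p - 1)) := by
  have key : ∀ s : Finset (Fin m), X i * pderiv i (∏ j ∈ s, (X j : MvPolynomial (Fin m) F) ^ (p - 1))
      = (if i ∈ s then p - 1 else 0) • ∏ j ∈ s, (X j : MvPolynomial (Fin m) F) ^ (p - 1) := by
    intro s
    have hs : ∏ j ∈ s, (X j : MvPolynomial (Fin m) F) ^ (p - 1)
        = monomial (∑ j ∈ s, Finsupp.single j (p - 1)) 1 := by
      rw [monomial_sum_one]
      exact Finset.prod_congr rfl fun j _ => X_pow_eq_monomial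
    rw [hs, X_mul_pderiv_monomial]
    congr 1
    rw [Finsupp.finsetSum_apply]
    simp only [Finsupp.single_apply, Finset.sum_ite_eq']
  rw [pk, map_sum, Finset.mul_sum, ← Finset.add_sum_erase _ _ (Finset.mem_univ i),
    ← Finset.add_sum_erase _ (fun i => ∏ j ∈ Finset.univ.erase i, X j ^ (p - 1))
      (Finset.mem_univ i), add_sub_cancel_left, key, Finset.smul_sum]
  simp only [Finset.notMem_erase, if_false, zero_smul, zero_add]
  refine Finset.sum_congr rfl fun l hl => ?_
  rw [key, if_pos (Finset.mem_erase.2 ⟨(Finset.ne_of_mem_erase hl).symm, Finset.mem_univ i⟩)]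

/-- `p_m` is squarefree (for `m ≥ 1`, which the index `i` witnesses): a repeated factor divides both
sides of `X_mul_pderiv_pk`, hence the product of powers of variables occurring there. -/
lemma not_sq_dvd (F : Type) [Field F] (p m : ℕ) [Fact p.Prime] [CharP F p] (i : Fin m)
    {q : MvPolynomial (Fin m) F} (hq : Irreducible q) (hqp : q ∣ pk F p m) :
    ¬ q ^ 2 ∣ pk F p m := by
  rintro ⟨c, hc⟩
  have hder : q ∣ MvPolynomial.X i * MvPolynomial.pderiv i (pk F p m) := by
    refine Dvd.dvd.mul_left ?_ _
    rw [hc, Derivation.leibniz, Derivation.leibniz_pow]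
    simp only [smul_eq_mul, nsmul_eq_mul]
    exact ⟨q * MvPolynomial.pderiv i c + c * (2 * MvPolynomial.pderiv i q), by push_cast; ring⟩
  have hd : ((p - 1 : ℕ) : MvPolynomial (Fin m) F) = -1 := by
    rw [Nat.cast_sub (Fact.out : p.Prime).one_le, CharP.cast_eq_zero]
    simp
  rw [X_mul_pderiv_pk, nsmul_eq_mul, hd, neg_one_mul, dvd_neg, dvd_sub_right hqp] at hder
  exact not_dvd_prod F p m hq hqp _ hder

open Polynomial in
lemma irreducible_of_irreducible_reverse {R : Type*} [CommRing R] [IsDomain R] {f : R[X]}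
    (h0 : f.coeff 0 ≠ 0) (hf : Irreducible f.reverse) : Irreducible f := by
  -- With nonzero constant term, reversal keeps the degree, so it detects units.
  have key : ∀ g : R[X], g.coeff 0 ≠ 0 → (IsUnit g.reverse ↔ IsUnit g) := by
    intro g hg
    have hdeg : g.reverse.natDegree = g.natDegree := by
      rw [reverse_natDegree, natTrailingDegree_eq_zero.2 (Or.inr hg), Nat.sub_zero]
    constructor
    · intro hu
      have hg0 : g.natDegree = 0 := hdeg ▸ natDegree_eq_zero_of_isUnit hu
      rw [eq_C_of_natDegree_eq_zero hg0] at hu ⊢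
      simpa using hu
    · intro hu
      have hg0 : g.natDegree = 0 := natDegree_eq_zero_of_isUnit hu
      rw [eq_C_of_natDegree_eq_zero hg0] at hu ⊢
      simpa using hu
  refine ⟨fun hu => hf.not_isUnit ((key f h0).2 hu), fun a b hab => ?_⟩
  rw [hab, mul_coeff_zero] at h0
  rw [← key a (left_ne_zero_of_mul h0), ← key b (right_ne_zero_of_mul h0)]
  exact hf.isUnit_or_isUnit (by rw [hab, reverse_mul_of_domain])

open Polynomial in
/-- Reversed form of Eisenstein's criterion for a binomial `a X ^ d + b`: the prime `q` divides the
*leading* coefficient exactly once. -/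
lemma irreducible_binomial {R : Type*} [CommRing R] [IsDomain R] {a b q : R} {d : ℕ} (hd : d ≠ 0)
    (ha : a ≠ 0) (hq : Prime q) (hqa : q ∣ a) (hqa2 : ¬ q ^ 2 ∣ a) (hqb : ¬ q ∣ b)
    (hprim : ∀ r, r ∣ a → r ∣ b → IsUnit r) :
    Irreducible (C a * X ^ d + C b) := by
  have hb : b ≠ 0 := by rintro rfl; simp at hqb
  have hdeg' : (C a * X ^ d + C b).natDegree = d := by
    rw [natDegree_add_C, natDegree_C_mul_X_pow d a ha]
  have hrev : (C a * X ^ d + C b).reverse = C b * X ^ d + C a := by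
    rw [reverse, hdeg', reflect_add, reflect_C_mul_X_pow, revAt_le le_rfl, reflect_C, Nat.sub_self,
      pow_zero, mul_one, add_comm]
  refine irreducible_of_irreducible_reverse (by simpa [hd.symm] using hb) ?_
  rw [hrev]
  have hnat : (C b * X ^ d + C a).natDegree = d := by
    rw [natDegree_add_C, natDegree_C_mul_X_pow d b hb]
  have hdeg : (C b * X ^ d + C a).degree = (d : WithBot ℕ) := by
    exact (degree_eq_iff_natDegree_eq_of_pos (Nat.pos_of_ne_zero hd)).2 hnat
  refine irreducible_of_eisenstein_criterion (P := Ideal.span {q})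
    ((Ideal.span_singleton_prime hq.ne_zero).2 hq) ?_ ?_ ?_ ?_ ?_
  · rw [leadingCoeff, hnat, Ideal.mem_span_singleton]
    simpa [coeff_C, hd] using hqb
  · intro n hn
    rw [hdeg, Nat.cast_lt] at hn
    rw [Ideal.mem_span_singleton, coeff_add, coeff_C_mul_X_pow, if_neg hn.ne, zero_add, coeff_C]
    split_ifs
    · exact hqa
    · exact dvd_zero q
  · rw [hdeg]
    exact_mod_cast Nat.pos_of_ne_zero hd
  · rw [Ideal.span_singleton_pow, Ideal.mem_span_singleton]
    simpa [hd.symm] using hqa2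
  · intro r hr
    rw [C_dvd_iff_dvd_coeff] at hr
    exact hprim r (by simpa [hd.symm] using hr 0) (by simpa [coeff_C, hd] using hr d)

/-- The recursion `p_{m+1} = p_m x_0^{p-1} + (x_1 ⋯ x_m)^{p-1}`; the constant term is the summand in
which `x_0` is omitted. -/
lemma finSuccEquiv_pk (F : Type) [Field F] (p m : ℕ) :
    MvPolynomial.finSuccEquiv F m (pk F p (m + 1)) =
      Polynomial.C (pk F p m) * Polynomial.X ^ (p - 1) +
        Polynomial.C (∏ j : Fin m, MvPolynomial.X j ^ (p - 1)) := by
  have h0 : (Finset.univ : Finset (Fin (m + 1))).erase 0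
      = Finset.univ.map (Fin.succEmb m) := by
    ext i; refine Fin.cases ?_ (fun i => ?_) i <;> simp
  have hs : ∀ i : Fin m, (Finset.univ : Finset (Fin (m + 1))).erase i.succ
      = insert 0 ((Finset.univ.erase i).map (Fin.succEmb m)) := by
    intro i; ext l; refine Fin.cases ?_ (fun l => ?_) l <;> simp [Fin.succ_ne_zero, eq_comm]
  rw [pk, Fin.sum_univ_succ, map_add, add_comm, h0, Finset.prod_map]
  congr 1
  · rw [pk, map_sum, map_sum, Finset.sum_mul]
    refine Finset.sum_congr rfl fun i _ => ?_
    rw [hs, Finset.prod_insert (by simp), Finset.prod_map]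
    simp [MvPolynomial.finSuccEquiv_X_zero, MvPolynomial.finSuccEquiv_X_succ, mul_comm]
  · simp [MvPolynomial.finSuccEquiv_X_succ]

/-- Lemma 2.2 (first part): for `k ≥ 3`, the polynomial `p_k` is irreducible in
`F[x_1, …, x_k]`, where `F` is an algebraically closed field of prime characteristic `p`. -/
theorem pk_irreducible (F : Type) [Field F] [IsAlgClosed F] (p k : ℕ) [Fact p.Prime]
    [CharP F p] (hk : 3 ≤ k) :
    Irreducible (pk F p k) := by
  obtain ⟨m, rfl⟩ : ∃ m, k = m + 1 := ⟨k - 1, by omega⟩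
  have hd : p - 1 ≠ 0 := by have := (Fact.out : p.Prime).two_le; omega
  let i₀ : Fin m := ⟨0, by omega⟩
  have hne := pk_ne_zero F p m i₀
  -- With at least two variables every summand of `p_m` vanishes at the origin.
  have hnu : ¬ IsUnit (pk F p m) := by
    intro hu
    have h0 : MvPolynomial.eval (fun _ => (0 : F)) (pk F p m) = 0 := by
      rw [pk, map_sum]
      refine Finset.sum_eq_zero fun i _ => ?_
      rw [map_prod]
      obtain ⟨j, hj⟩ : ∃ j : Fin m, j ≠ i := by
        have : Nontrivial (Fin m) := Fin.nontrivial_iff_two_le.2 (by omega)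
        exact exists_ne i
      exact Finset.prod_eq_zero (Finset.mem_erase.2 ⟨hj, Finset.mem_univ j⟩) (by simp [hd])
    exact (hu.map (MvPolynomial.eval fun _ => (0 : F))).ne_zero h0
  obtain ⟨q, hq, hqp⟩ := WfDvdMonoid.exists_irreducible_factor hnu hne
  rw [← MulEquiv.irreducible_iff (MvPolynomial.finSuccEquiv F m), finSuccEquiv_pk]
  refine irreducible_binomial hd hne hq.prime hqp (not_sq_dvd F p m i₀ hq hqp)
    (not_dvd_prod F p m hq hqp _) fun r hra hrb => ?_
  by_contra hr
  obtain ⟨q', hq', hqr⟩ := WfDvdMonoid.exists_irreducible_factor hr (ne_zero_of_dvd_ne_zero hne hra)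
  exact not_dvd_prod F p m hq' (hqr.trans hra) _ (hqr.trans hrb)

end
end

section
/- Assume p is odd, k ≥ 2 and k ≢ 1 (mod p). Then there exists a finite-dimensional module M over the group algebra F[(ℤ/pℤ)^k] with dim_F M equal to the binomial coefficient C(kp−2, p−1) whose rank variety equals the zero locus V(p_k) ⊆ F^k; consequently d_{V(p_k)} ≤ C(kp−2, p−1). -/
/-!
Write `L = ⨁_{i<k} F[x]/(x ^ p)` for the module on which `g_i - 1` acts as `x` on the `i`-th summand
and as `0` on the others, and let `D` be the subquotient of `L` obtained from the kernel of the sum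
of the `k` augmentations by dividing out the sum of the `k` socle elements `x ^ (p - 1)`. Then
`dim D = k p - 2`. The module is the space of alternating `(p - 1)`-forms on `D`, of dimension
`C(k p - 2, p - 1)`, on which the operators `g_i - 1` of `D` act as derivations
(`altDer`). This is again a module over the group algebra, because a derivation induced by an
operator of `p`-th power zero has `p`-th power zero. The derivation depends linearly on the
operator, so `X_α` acts on the forms as the derivation induced by `X_α` on `D`.

Off the hypersurface, `D` restricted to `X_α` is the sum of a free module of rank `k - 1` and a
module of dimension `p - 2`. Differentiation on the free part gives an operator `Y` of `D`
such that `P = X_α Y - Y X_α` is the projection onto the free part. A `(p - 1)`-form has at most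
`p - 2` independent arguments in the complement, so every eigenvalue of the derivation induced by
`P` is one of `1, …, p - 1`, and this derivation is invertible
(`altDer_idempotent_injective`). Dividing the derivation induced by `Y` by it yields a partner of
`X_α` for the Weyl relation `X Z - Z X = 1`, and an operator with `X ^ p = 0` that has such a
partner acts freely (`actsFreely_of_weyl`).

On the hypersurface, `D` restricted to `X_α` has a direct summand of dimension `p - 1`
(`heart_not_free`). Its determinant is a `(p - 1)`-form on `D` which `X_α` kills, and which is not
in the range of `X_α` because `X_α` kills all top forms of the summand. So `X_α` does not act
freely (`not_actsFreely_altDer`).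
-/

noncomputable section

/-- A `p`-nilpotent operator `X` on a finite-dimensional `F`-vector space `M` "acts freely"
(i.e. `M` is free as a module over `F[t]/(t^p)` with `t` acting as `X`) iff
`rank X = (p-1)·dim_F M / p`. -/
def ActsFreely (p : ℕ) {F M : Type} [Field F] [AddCommGroup M] [Module F M]
    (X : Module.End F M) : Prop :=
  p * Module.finrank F (LinearMap.range X) = (p - 1) * Module.finrank F M

/-- The operator `X_α = ∑ i, α_i (ρ(g_i) - 1)` attached to a representation `ρ` of a group
with ordered generators `g` and a point `α ∈ F^r`. -/
def Xop {F G M : Type} [Field F] [Monoid G] [AddCommGroup M] [Module F M]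
    (ρ : Representation F G M) {r : ℕ} (g : Fin r → G) (α : Fin r → F) : Module.End F M :=
  ∑ i, α i • (ρ (g i) - 1)

/-- The rank variety `V^#_E(M) = {0} ∪ {α ≠ 0 : X_α does not act freely on M}`. -/
def rankVariety (p : ℕ) {F G M : Type} [Field F] [Monoid G] [AddCommGroup M] [Module F M]
    (ρ : Representation F G M) {r : ℕ} (g : Fin r → G) : Set (Fin r → F) :=
  {α | α = 0 ∨ ¬ ActsFreely p (Xop ρ g α)}

/-- The standard ordered generators of the elementary abelian group `E = (ℤ/pℤ)^k`. -/
def gens (p k : ℕ) : Fin k → Multiplicative (Fin k → ZMod p) :=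
  fun i => Multiplicative.ofAdd (Pi.single i 1)

/-- The set of `F`-dimensions of finite-dimensional `F[(ℤ/pℤ)^k]`-modules whose rank
variety equals the homogeneous variety `V ⊆ F^k`. -/
def dimSet (F : Type) [Field F] (p k : ℕ) (V : Set (Fin k → F)) : Set ℕ :=
  {n | ∃ (M : Type) (_ : AddCommGroup M) (_ : Module F M) (_ : FiniteDimensional F M)
        (ρ : Representation F (Multiplicative (Fin k → ZMod p)) M),
        Module.finrank F M = n ∧ rankVariety p ρ (gens p k) = V}

/-! ### Operators with `X ^ p = 0` -/

section Nilpotent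

variable {F M : Type} [Field F] [AddCommGroup M] [Module F M]

/-- A lowering operator `X` and a raising operator `Z` acting on a vector killed by `X`. -/
lemma weyl_pow (X Z : Module.End F M) (h : X * Z - Z * X = 1) (w : M) (hw : X w = 0) (i : ℕ) :
    X ((Z ^ (i + 1)) w) = ((i + 1 : ℕ) : F) • (Z ^ i) w := by
  have h' (v : M) : X (Z v) = Z (X v) + v := by
    have := congrArg (fun T : Module.End F M => T v) h
    simp only [LinearMap.sub_apply, Module.End.mul_apply, Module.End.one_apply] at this
    exact (sub_eq_iff_eq_add'.mp this)
  induction i with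
  | zero => simp [h', hw]
  | succ i ih =>
    rw [pow_succ', Module.End.mul_apply, h', ih, map_smul, ← Module.End.mul_apply, ← pow_succ']
    push_cast
    module

lemma weyl_pow_pow (X Z : Module.End F M) (h : X * Z - Z * X = 1) (w : M) (hw : X w = 0)
    (i j : ℕ) :
    (X ^ j) ((Z ^ (i + j)) w) = ((i + j).descFactorial j : F) • (Z ^ i) w := by
  induction j with
  | zero => simp
  | succ j ih =>
    rw [pow_succ, Module.End.mul_apply, ← add_assoc, weyl_pow X Z h w hw, map_smul, ih, smul_smul,
      Nat.succ_descFactorial_succ]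
    push_cast
    ring_nf

variable [FiniteDimensional F M]

lemma finrank_ker_pow_succ_le (X : Module.End F M) (n : ℕ) :
    Module.finrank F (LinearMap.ker (X ^ (n + 1))) ≤ Module.finrank F (LinearMap.ker (X ^ n)) +
      Module.finrank F (LinearMap.ker X ⊓ LinearMap.range (X ^ n) : Submodule F M) := by
  set g := (X ^ n).domRestrict (LinearMap.ker (X ^ (n + 1))) with hg
  have h1 := g.finrank_range_add_finrank_ker
  have h2 : LinearMap.range g ≤ LinearMap.ker X ⊓ LinearMap.range (X ^ n) := by
    rintro _ ⟨⟨x, hx⟩, rfl⟩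
    refine ⟨?_, ⟨x, rfl⟩⟩
    rw [LinearMap.mem_ker, pow_succ'] at hx
    simpa [hg] using hx
  have h3 : Module.finrank F (LinearMap.ker g) ≤ Module.finrank F (LinearMap.ker (X ^ n)) := by
    let f : LinearMap.ker g →ₗ[F] LinearMap.ker (X ^ n) :=
      ((Submodule.subtype _).comp (Submodule.subtype _)).codRestrict _ (fun x => x.2)
    refine LinearMap.finrank_le_finrank_of_injective (f := f) ?_
    intro x y hxy
    exact Subtype.ext (Subtype.ext (congrArg (fun z : LinearMap.ker (X ^ n) => (z : M)) hxy))
  have h4 := Submodule.finrank_mono h2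
  omega

/-- All the blocks of `X` contribute to `ker X`, and those of size at least `2` contribute to
`ker X ⊓ range X`. -/
lemma finrank_ker_pow_le (X : Module.End F M) (n : ℕ) :
    Module.finrank F (LinearMap.ker (X ^ (n + 1))) ≤ Module.finrank F (LinearMap.ker X) +
      n * Module.finrank F (LinearMap.ker X ⊓ LinearMap.range X : Submodule F M) := by
  induction n with
  | zero => rw [zero_add, pow_one]; omega
  | succ n ih =>
    have h := finrank_ker_pow_succ_le X (n + 1)
    have h2 : (LinearMap.ker X ⊓ LinearMap.range (X ^ (n + 1)) : Submodule F M) ≤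
        LinearMap.ker X ⊓ LinearMap.range X := by
      refine inf_le_inf_left _ ?_
      rintro _ ⟨x, rfl⟩
      exact ⟨(X ^ n) x, by rw [pow_succ']; rfl⟩
    have h4 := Submodule.finrank_mono h2
    have e : (n + 1) * Module.finrank F (LinearMap.ker X ⊓ LinearMap.range X : Submodule F M) =
      n * Module.finrank F (LinearMap.ker X ⊓ LinearMap.range X : Submodule F M) +
      Module.finrank F (LinearMap.ker X ⊓ LinearMap.range X : Submodule F M) := by ring
    omega

/-- `X` acts freely iff its number of blocks, which is `dim (ker X)`, is `dim M / p`. -/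
lemma actsFreely_iff (p : ℕ) (hp : 1 ≤ p) (X : Module.End F M) :
    ActsFreely p X ↔ Module.finrank F M = p * Module.finrank F (LinearMap.ker X) := by
  have h := X.finrank_range_add_finrank_ker
  obtain ⟨m, rfl⟩ : ∃ m, p = m + 1 := ⟨p - 1, by omega⟩
  unfold ActsFreely
  rw [← h]
  simp only [Nat.add_sub_cancel]
  constructor <;> intro h <;> nlinarith

/-- For a free action `ker X` lies in `range X`, so a vector of `ker X` outside `range X`, i.e. a
block of size `1`, prevents freeness. -/
lemma not_actsFreely (p : ℕ) (hp : 2 ≤ p) (X : Module.End F M) (hX : X ^ p = 0) (w : M)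
    (hw : X w = 0) (hw' : w ∉ LinearMap.range X) : ¬ ActsFreely p X := by
  rw [actsFreely_iff p (by omega)]
  intro h
  obtain ⟨m, rfl⟩ : ∃ m, p = m + 2 := ⟨p - 2, by omega⟩
  have h1 := finrank_ker_pow_le X (m + 1)
  rw [hX, LinearMap.ker_zero, finrank_top] at h1
  have h2 : (LinearMap.ker X ⊓ LinearMap.range X : Submodule F M) < LinearMap.ker X := by
    refine lt_of_le_of_ne inf_le_left fun h => hw' ?_
    have : w ∈ (LinearMap.ker X ⊓ LinearMap.range X : Submodule F M) := by
      rw [h]; exact hw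
    exact this.2
  have h3 := Submodule.finrank_lt_finrank_of_lt h2
  nlinarith

/-- A nilpotent operator `X` with `X ^ p = 0` in characteristic `p` which has a partner `Z`
satisfying the Weyl relation `XZ - ZX = 1` acts freely: `⨁_{i<p} Z ^ i (ker X)` embeds in `M`. -/
lemma actsFreely_of_weyl (p : ℕ) [Fact p.Prime] [CharP F p] (X Z : Module.End F M)
    (hX : X ^ p = 0) (h : X * Z - Z * X = 1) : ActsFreely p X := by
  have hp : p.Prime := Fact.out
  rw [actsFreely_iff p hp.one_lt.le]
  apply le_antisymm
  · obtain ⟨m, rfl⟩ : ∃ m, p = m + 1 := ⟨p - 1, by have := hp.one_lt; omega⟩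
    have h1 := finrank_ker_pow_le X m
    rw [hX, LinearMap.ker_zero, finrank_top] at h1
    have h2 := Submodule.finrank_mono
      (inf_le_left : (LinearMap.ker X ⊓ LinearMap.range X : Submodule F M) ≤ LinearMap.ker X)
    nlinarith
  · let f : (Fin p → LinearMap.ker X) →ₗ[F] M :=
      ∑ i : Fin p, (Z ^ (i : ℕ)).comp ((Submodule.subtype _).comp (LinearMap.proj i))
    have hf (v) : f v = ∑ i : Fin p, (Z ^ (i : ℕ)) (v i : M) := by
      simp [f, LinearMap.sum_apply]
    have hinj : Function.Injective f := by
      rw [injective_iff_map_eq_zero]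
      intro v hv
      classical
      by_contra hne
      have hex : ∃ i, v i ≠ 0 := by
        by_contra! hc; exact hne (funext hc)
      -- the largest index with a nonzero entry
      obtain ⟨i, hi, hmax⟩ := Finset.exists_max_image
        (Finset.univ.filter fun i => v i ≠ 0) id (by simpa [Finset.Nonempty] using hex)
      simp only [Finset.mem_filter, Finset.mem_univ, true_and, id] at hi hmax
      have h1 := congrArg (X ^ (i : ℕ)) hv
      rw [hf, map_sum, map_zero, Finset.sum_eq_single i] at h1
      · have h2 := weyl_pow_pow X Z h (v i : M) (v i).2 0 i
        rw [zero_add] at h2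
        rw [h2, Nat.descFactorial_self, pow_zero, Module.End.one_apply, smul_eq_zero] at h1
        rcases h1 with h1 | h1
        · rw [CharP.cast_eq_zero_iff F p, hp.dvd_factorial] at h1
          omega
        · exact hi (Subtype.ext h1)
      · intro b _ hb
        by_cases hvb : v b = 0
        · simp [hvb]
        · have hlt : (b : ℕ) < i := lt_of_le_of_ne (hmax b hvb) (fun e => hb (Fin.ext e))
          have h2 := weyl_pow_pow X Z h (v b : M) (v b).2 0 b
          rw [zero_add, pow_zero, Module.End.one_apply] at h2
          obtain ⟨c, hc⟩ : ∃ c, (i : ℕ) = c + 1 + b := ⟨i - b - 1, by omega⟩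
          rw [hc, pow_add, Module.End.mul_apply, h2, map_smul, pow_succ, Module.End.mul_apply,
            (v b).2, map_zero, smul_zero]
      · simp
    have := LinearMap.finrank_le_finrank_of_injective hinj
    rwa [Module.finrank_pi_fintype, Finset.sum_const, Finset.card_univ, Fintype.card_fin,
      smul_eq_mul] at this

end Nilpotent

/-! ### Derivations of multilinear and alternating forms -/

section Derivation

variable {F V W : Type} [Field F] [AddCommGroup V] [Module F V] [AddCommGroup W] [Module F W]
  {n : ℕ}

/-- The operator on multilinear forms which precomposes the `i`-th argument with `X`. -/
def slot (i : Fin n) (X : Module.End F V) :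
    Module.End F (MultilinearMap F (fun _ : Fin n => V) F) :=
  MultilinearMap.compLinearMapₗ (fun j => if j = i then X else LinearMap.id)

lemma slot_apply (i : Fin n) (X : Module.End F V) (m : MultilinearMap F (fun _ : Fin n => V) F)
    (v : Fin n → V) : slot i X m v = m (Function.update v i (X (v i))) := by
  simp only [slot, MultilinearMap.compLinearMapₗ_apply, MultilinearMap.compLinearMap_apply]
  congr 1
  funext j
  by_cases h : j = i
  · subst h; simp
  · simp [h]

lemma slot_mul (i : Fin n) (X Y : Module.End F V) : slot i X * slot i Y = slot i (Y * X) := by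
  ext m v
  simp [slot_apply]

lemma slot_comm {i j : Fin n} (h : i ≠ j) (X Y : Module.End F V) :
    slot i X * slot j Y = slot j Y * slot i X := by
  ext m v
  simp only [Module.End.mul_apply, slot_apply]
  rw [Function.update_of_ne h.symm, Function.update_of_ne h, Function.update_comm h]

lemma slot_add (i : Fin n) (X Y : Module.End F V) : slot i (X + Y) = slot i X + slot i Y := by
  ext m v
  simp [slot_apply]

lemma slot_smul (i : Fin n) (c : F) (X : Module.End F V) : slot i (c • X) = c • slot i X := by
  ext m v
  simp [slot_apply]

lemma slot_zero (i : Fin n) : slot i (0 : Module.End F V) = 0 := by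
  simpa using slot_smul i (0 : F) (0 : Module.End F V)

lemma slot_one (i : Fin n) : slot i (1 : Module.End F V) = 1 := by
  ext m v
  simp [slot_apply]

lemma slot_pow (i : Fin n) (X : Module.End F V) (a : ℕ) : slot i X ^ a = slot i (X ^ a) := by
  induction a with
  | zero => simp [slot_one]
  | succ a ih => rw [pow_succ, ih, slot_mul, ← pow_succ']

/-- The derivation action of `X` on multilinear forms, with respect to the coproduct
`X ↦ ∑ 1 ⊗ ⋯ ⊗ X ⊗ ⋯ ⊗ 1`. -/
def multDer (X : Module.End F V) : Module.End F (MultilinearMap F (fun _ : Fin n => V) F) :=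
  ∑ i, slot i X

lemma multDer_apply (X : Module.End F V) (m : MultilinearMap F (fun _ : Fin n => V) F)
    (v : Fin n → V) : multDer X m v = ∑ i, m (Function.update v i (X (v i))) := by
  simp [multDer, LinearMap.sum_apply, slot_apply]

lemma multDer_commutator (X Y : Module.End F V) :
    (multDer X * multDer Y : Module.End F (MultilinearMap F (fun _ : Fin n => V) F)) =
      multDer Y * multDer X + multDer (Y * X - X * Y) := by
  simp only [multDer, Finset.sum_mul_sum]
  rw [Finset.sum_comm (γ := Fin n) (f := fun i j => slot i Y * slot j X),
    ← Finset.sum_add_distrib]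
  refine Finset.sum_congr rfl fun i _ => ?_
  have e : slot i (Y * X - X * Y) = ∑ j, if i = j then slot i (Y * X - X * Y) else 0 := by simp
  rw [e, ← Finset.sum_add_distrib]
  refine Finset.sum_congr rfl fun j _ => ?_
  by_cases hj : i = j
  · subst hj
    rw [if_pos rfl, slot_mul, slot_mul, ← slot_add, add_sub_cancel]
  · rw [if_neg hj, add_zero, slot_comm hj]

lemma sum_pow_char_eq_zero {A ι : Type} [Ring A] [Algebra F A] (p : ℕ) [Fact p.Prime] [CharP F p]
    (s : Finset ι) (f : ι → A) (hc : ∀ i j, Commute (f i) (f j)) (h0 : ∀ i, f i ^ p = 0) :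
    (∑ i ∈ s, f i) ^ p = 0 := by
  classical
  have hp : p.Prime := Fact.out
  cases subsingleton_or_nontrivial A
  · exact Subsingleton.elim _ _
  have : CharP A p := charP_of_injective_algebraMap (FaithfulSMul.algebraMap_injective F A) p
  induction s using Finset.induction_on with
  | empty => simp [hp.ne_zero]
  | insert a s ha ih =>
    rw [Finset.sum_insert ha, add_pow_char_of_commute, h0, ih, add_zero]
    exact Commute.sum_right _ _ _ fun j _ => hc a j

lemma multDer_pow_char (p : ℕ) [Fact p.Prime] [CharP F p] (X : Module.End F V) (h : X ^ p = 0) :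
    (multDer X : Module.End F (MultilinearMap F (fun _ : Fin n => V) F)) ^ p = 0 := by
  refine sum_pow_char_eq_zero (F := F)
    (A := Module.End F (MultilinearMap F (fun _ : Fin n => V) F)) p _ _ (fun i j => ?_) (fun i => ?_)
  · by_cases hij : i = j
    · subst hij; exact Commute.refl _
    · exact slot_comm hij X X
  · rw [slot_pow, h, slot_zero]

/-- The derivation action of `X` on alternating forms,
`ω ↦ ∑ i, ω (v_1, …, X v_i, …, v_n)`. -/
def altDer (X : Module.End F V) : Module.End F (V [⋀^Fin n]→ₗ[F] F) where
  toFun w :=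
    { multDer X w.toMultilinearMap with
      map_eq_zero_of_eq' := by
        intro v a b hv hab
        change multDer X w.toMultilinearMap v = 0
        rw [multDer_apply]
        simp only [AlternatingMap.coe_multilinearMap]
        rw [← Finset.sum_subset (Finset.subset_univ {a, b}), Finset.sum_pair hab]
        · have h := w.map_swap_add (Function.update v a (X (v a))) hab
          have e : Function.update v a (X (v a)) ∘ Equiv.swap a b =
              Function.update v b (X (v b)) := by
            funext j
            simp only [Function.comp, Function.update_apply, Equiv.swap_apply_def]
            split_ifs <;> simp_all
          rw [e, add_comm] at h
          exact h
        · intro j _ hj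
          simp only [Finset.mem_insert, Finset.mem_singleton, not_or] at hj
          refine w.map_eq_zero_of_eq _ ?_ hab
          rw [Function.update_of_ne (Ne.symm hj.1), Function.update_of_ne (Ne.symm hj.2), hv] }
  map_add' w w' := by
    ext v
    exact congrArg (fun m : MultilinearMap F (fun _ : Fin n => V) F => m v)
      (map_add (multDer X) w.toMultilinearMap w'.toMultilinearMap)
  map_smul' c w := by
    ext v
    exact congrArg (fun m : MultilinearMap F (fun _ : Fin n => V) F => m v)
      (map_smul (multDer X) c w.toMultilinearMap)

lemma altDer_apply (X : Module.End F V) (w : V [⋀^Fin n]→ₗ[F] F) (v : Fin n → V) :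
    altDer X w v = ∑ i, w (Function.update v i (X (v i))) :=
  multDer_apply X w.toMultilinearMap v

lemma coe_altDer (X : Module.End F V) (w : V [⋀^Fin n]→ₗ[F] F) :
    (altDer X w).toMultilinearMap = multDer X w.toMultilinearMap := rfl

lemma altDer_add (X Y : Module.End F V) :
    (altDer (X + Y) : Module.End F (V [⋀^Fin n]→ₗ[F] F)) = altDer X + altDer Y := by
  ext w v
  simp [altDer_apply, Finset.sum_add_distrib]

lemma altDer_smul (c : F) (X : Module.End F V) :
    (altDer (c • X) : Module.End F (V [⋀^Fin n]→ₗ[F] F)) = c • altDer X := by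
  ext w v
  simp [altDer_apply, Finset.mul_sum]

/-- `altDer` as a linear map in the operator. -/
def altDerₗ : Module.End F V →ₗ[F] Module.End F (V [⋀^Fin n]→ₗ[F] F) where
  toFun := altDer
  map_add' := altDer_add
  map_smul' := altDer_smul

lemma altDer_zero : (altDer (0 : Module.End F V) : Module.End F (V [⋀^Fin n]→ₗ[F] F)) = 0 :=
  map_zero (altDerₗ (F := F) (V := V) (n := n))

/-- `altDer` is an anti-homomorphism of Lie algebras, since forms are contravariant. -/
lemma altDer_commutator (X Y : Module.End F V) :
    (altDer X * altDer Y : Module.End F (V [⋀^Fin n]→ₗ[F] F)) =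
      altDer Y * altDer X + altDer (Y * X - X * Y) := by
  refine LinearMap.ext fun w => AlternatingMap.coe_multilinearMap_injective ?_
  exact congrArg (fun T => T w.toMultilinearMap) (multDer_commutator (n := n) X Y)

lemma altDer_commute {X Y : Module.End F V} (h : Commute X Y) :
    Commute (altDer X : Module.End F (V [⋀^Fin n]→ₗ[F] F)) (altDer Y) := by
  have := altDer_commutator (n := n) X Y
  rw [h.eq, sub_self, altDer_zero, add_zero] at this
  exact this

lemma altDer_pow_char (p : ℕ) [Fact p.Prime] [CharP F p] (X : Module.End F V) (h : X ^ p = 0) :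
    (altDer X : Module.End F (V [⋀^Fin n]→ₗ[F] F)) ^ p = 0 := by
  have key (a : ℕ) (w : V [⋀^Fin n]→ₗ[F] F) :
      ((altDer X ^ a) w).toMultilinearMap = (multDer X ^ a) w.toMultilinearMap := by
    induction a with
    | zero => rfl
    | succ a ih =>
      rw [pow_succ', pow_succ', Module.End.mul_apply, Module.End.mul_apply, coe_altDer, ih]
  refine LinearMap.ext fun w => AlternatingMap.coe_multilinearMap_injective ?_
  change ((altDer X ^ p) w).toMultilinearMap = _
  rw [key, multDer_pow_char p X h]
  rfl

lemma altDer_compLinearMap (X : Module.End F V) (Y : Module.End F W) (s : W →ₗ[F] V)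
    (h : X ∘ₗ s = s ∘ₗ Y) (w : V [⋀^Fin n]→ₗ[F] F) :
    (altDer X w).compLinearMap s = altDer Y (w.compLinearMap s) := by
  ext v
  simp only [AlternatingMap.compLinearMap_apply, altDer_apply]
  refine Finset.sum_congr rfl fun i _ => congrArg w ?_
  have h' := LinearMap.congr_fun h (v i)
  simp only [LinearMap.comp_apply] at h'
  funext j
  by_cases hj : j = i
  · subst hj; simp [h']
  · simp [hj]

instance [FiniteDimensional F V] : FiniteDimensional F (V [⋀^Fin n]→ₗ[F] F) :=
  Module.Finite.equiv (exteriorPower.alternatingMapLinearEquiv (R := F) (M := V) (N := F)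
    (n := n)).symm

lemma finrank_alternatingMap [FiniteDimensional F V] :
    Module.finrank F (V [⋀^Fin n]→ₗ[F] F) = (Module.finrank F V).choose n := by
  rw [(exteriorPower.alternatingMapLinearEquiv (R := F) (M := V) (N := F) (n := n)).finrank_eq,
    Module.finrank_linearMap_self, exteriorPower.finrank_eq]

end Derivation

/-! ### Freeness criteria for alternating forms -/

section Criteria

variable {F V : Type} [Field F] [AddCommGroup V] [Module F V] {n : ℕ}

/-- A nilpotent operator kills the top forms: it acts on that line by its trace. -/
lemma altDer_top_eq_zero (p : ℕ) [Fact p.Prime] [CharP F p] (N : Module.End F (Fin n → F))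
    (hN : N ^ p = 0) (w : (Fin n → F) [⋀^Fin n]→ₗ[F] F) : altDer N w = 0 := by
  set e := Pi.basisFun F (Fin n) with he
  set c := altDer N e.det e with hc
  have h1 : altDer N e.det = c • e.det := AlternatingMap.eq_smul_basis_det e _
  have h2 (a : ℕ) : (altDer N ^ a) e.det = c ^ a • e.det := by
    induction a with
    | zero => simp
    | succ a ih => rw [pow_succ, Module.End.mul_apply, h1, map_smul, ih, smul_smul, pow_succ']
  have h3 := h2 p
  rw [altDer_pow_char p N hN] at h3
  have h4 := congrArg (fun w : (Fin n → F) [⋀^Fin n]→ₗ[F] F => w e) h3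
  simp only [LinearMap.zero_apply, AlternatingMap.zero_apply, AlternatingMap.smul_apply,
    Module.Basis.det_self, smul_eq_mul, mul_one] at h4
  have h5 : c = 0 := eq_zero_of_pow_eq_zero h4.symm
  rw [AlternatingMap.eq_smul_basis_det e w, map_smul, h1, h5, zero_smul, smul_zero]

/-- If `V` has an `X`-equivariant retract of dimension `n`, then the pullback to `V` of the
determinant of the retract is killed by `X`, and it is not in the range of `X`: its restriction to
the retract is nonzero, while `X` kills all `n`-forms there. -/
lemma not_actsFreely_altDer [FiniteDimensional F V] (p : ℕ) [Fact p.Prime] [CharP F p]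
    (X : Module.End F V) (hX : X ^ p = 0) (s : (Fin n → F) →ₗ[F] V) (f : V →ₗ[F] (Fin n → F))
    (N : Module.End F (Fin n → F)) (hN : N ^ p = 0) (hs : X ∘ₗ s = s ∘ₗ N)
    (hf : f ∘ₗ X = N ∘ₗ f) (hfs : f ∘ₗ s = LinearMap.id) :
    ¬ ActsFreely p (altDer X : Module.End F (V [⋀^Fin n]→ₗ[F] F)) := by
  set e := Pi.basisFun F (Fin n) with he
  refine not_actsFreely p (Fact.out : p.Prime).two_le _ (altDer_pow_char p X hX)
    (e.det.compLinearMap f) ?_ ?_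
  · rw [← altDer_compLinearMap N X f hf.symm, altDer_top_eq_zero p N hN,
      AlternatingMap.zero_compLinearMap]
  · rintro ⟨w, hw⟩
    have h1 := congrArg (fun w => AlternatingMap.compLinearMap w s) hw
    simp only [altDer_compLinearMap X N s hs, altDer_top_eq_zero p N hN] at h1
    have h2 := congrArg (fun w : (Fin n → F) [⋀^Fin n]→ₗ[F] F => w e) h1
    have h3 (i) : f (s (e i)) = e i := LinearMap.congr_fun hfs (e i)
    have h4 : (0 : F) = e.det fun i => e i := by simpa [h3] using h2
    rw [e.det_self] at h4
    exact zero_ne_one h4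

/-- An idempotent `P` acts on a form with `r` arguments from `range P` and `n - r` arguments from
`ker P` as multiplication by `r`. The value `r = 0` does not contribute because `n` vectors of
`ker P` are dependent, and the other values are invertible because `r ≤ n < p`. -/
lemma altDer_idempotent_injective [FiniteDimensional F V] (p : ℕ) [Fact p.Prime] [CharP F p]
    (hn : n < p) (P : Module.End F V) (hP : P * P = P)
    (hk : Module.finrank F (LinearMap.ker P) < n) :
    Function.Injective (altDer P : Module.End F (V [⋀^Fin n]→ₗ[F] F)) := by
  classical
  rw [injective_iff_map_eq_zero]
  intro w hw
  have hPP (v : V) : P (P v) = P v := LinearMap.congr_fun hP v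
  ext v
  have hv : v = (fun i => P (v i)) + (fun i => v i - P (v i)) := by
    funext i; simp
  have hsum := w.toMultilinearMap.map_add_univ (fun i => P (v i)) (fun i => v i - P (v i))
  rw [← hv] at hsum
  change w v = _ at hsum
  rw [hsum, AlternatingMap.zero_apply]
  refine Finset.sum_eq_zero fun s _ => ?_
  rw [AlternatingMap.coe_multilinearMap]
  set u := s.piecewise (fun i => P (v i)) (fun i => v i - P (v i)) with hu
  have hu1 (i) (hi : i ∈ s) : P (u i) = u i := by
    rw [hu, Finset.piecewise_eq_of_mem _ _ _ hi, hPP]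
  have hu2 (i) (hi : i ∉ s) : P (u i) = 0 := by
    rw [hu, Finset.piecewise_eq_of_notMem _ _ _ hi, map_sub, hPP, sub_self]
  have h1 : altDer P w u = (s.card : F) * w u := by
    rw [altDer_apply]
    have hw1 (i : Fin n) : w (Function.update u i (P (u i))) = if i ∈ s then w u else 0 := by
      split_ifs with hi
      · rw [hu1 i hi, Function.update_eq_self]
      · rw [hu2 i hi, AlternatingMap.map_update_zero]
    simp [hw1]
  rw [hw, AlternatingMap.zero_apply, eq_comm, mul_eq_zero] at h1
  rcases h1 with h1 | h1
  · rw [CharP.cast_eq_zero_iff F p] at h1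
    have hs0 : s.card = 0 := by
      refine Nat.eq_zero_of_dvd_of_lt h1 (lt_of_le_of_lt ?_ hn)
      simpa using s.card_le_univ
    rw [Finset.card_eq_zero] at hs0
    refine w.map_linearDependent _ fun hli => ?_
    -- all the arguments lie in the small space `ker P`
    let u' : Fin n → LinearMap.ker P := fun i => ⟨u i, hu2 i (by simp [hs0])⟩
    have hli' : LinearIndependent F u' := by
      apply LinearIndependent.of_comp (Submodule.subtype _)
      exact hli
    have := hli'.fintype_card_le_finrank
    simp at this
    omega
  · exact h1

/-- The hypotheses say that `range E` generates a free summand of `V` over `F[X]/(X ^ p)`, with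
`E` reading off the coefficient of `X ^ (p - 1)`. The conclusion provides the projection `P` onto
that summand and an operator `Y` with `XY - YX = P`. On the summand `F[X]/(X ^ p)` the operator `Y`
is `-d/dX`, which preserves the ideal `(X ^ p)` in characteristic `p`. -/
lemma free_part (p : ℕ) [Fact p.Prime] [CharP F p] (X E : Module.End F V) (hX : X ^ p = 0)
    (hE : ∀ c, c + 1 < p → E * X ^ c * E = 0) (hE' : E * X ^ (p - 1) * E = E) :
    ∃ Y P : Module.End F V, X * Y = Y * X + P ∧ Commute X P ∧ P * P = P ∧
      ∀ m < p, P * X ^ m * E = X ^ m * E := by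
  obtain ⟨q, rfl⟩ : ∃ q, p = q + 1 := ⟨p - 1, by have := (Fact.out : p.Prime).pos; omega⟩
  rw [Nat.add_sub_cancel] at hE'
  set T : ℕ → Module.End F V := fun m => X ^ m * E * X ^ (q - m) with hT
  have hTE (a m : ℕ) (ha : a < q + 1) (hm : m < q + 1) :
      T a * X ^ m * E = if a = m then X ^ m * E else 0 := by
    have e : T a * X ^ m * E = X ^ a * (E * X ^ (q - a + m) * E) := by
      simp only [hT, pow_add, mul_assoc]
    rw [e]
    split_ifs with h
    · rw [h, show q - m + m = q by omega, hE']
    · rcases lt_or_gt_of_ne h with h | h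
      · rw [show q - a + m = (q + 1) + (m - a - 1) by omega, pow_add, hX]
        simp
      · rw [hE _ (by omega), mul_zero]
  have hPE (m : ℕ) (hm : m < q + 1) :
      (∑ a ∈ Finset.range (q + 1), T a) * X ^ m * E = X ^ m * E := by
    rw [Finset.sum_mul, Finset.sum_mul, Finset.sum_congr rfl fun a ha =>
      hTE a m (Finset.mem_range.mp ha) hm]
    simp [hm]
  refine ⟨-∑ m ∈ Finset.range q, ((m + 1 : ℕ) : F) • (X ^ m * E * X ^ (q - 1 - m)),
    ∑ a ∈ Finset.range (q + 1), T a, ?_, ?_, ?_, hPE⟩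
  · have h1 : X * (∑ m ∈ Finset.range q, ((m + 1 : ℕ) : F) • (X ^ m * E * X ^ (q - 1 - m))) =
        ∑ m ∈ Finset.range q, ((m + 1 : ℕ) : F) • T (m + 1) := by
      rw [Finset.mul_sum]
      refine Finset.sum_congr rfl fun m hm => ?_
      rw [mul_smul_comm, hT]
      simp only [pow_succ', mul_assoc, show q - (m + 1) = q - 1 - m by omega]
    have h2 : (∑ m ∈ Finset.range q, ((m + 1 : ℕ) : F) • (X ^ m * E * X ^ (q - 1 - m))) * X =
        ∑ m ∈ Finset.range q, ((m + 1 : ℕ) : F) • T m := by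
      rw [Finset.sum_mul]
      refine Finset.sum_congr rfl fun m hm => ?_
      have := Finset.mem_range.mp hm
      rw [smul_mul_assoc, hT, mul_assoc (X ^ m * E), ← pow_succ,
        show q - 1 - m + 1 = q - m by omega]
    rw [mul_neg, neg_mul, h1, h2]
    have h3 : ∑ m ∈ Finset.range q, ((m + 1 : ℕ) : F) • T (m + 1) =
        ∑ m ∈ Finset.range (q + 1), ((m : ℕ) : F) • T m := by
      rw [Finset.sum_range_succ' (fun m => ((m : ℕ) : F) • T m) q]
      simp
    have h4 : ∑ m ∈ Finset.range q, ((m + 1 : ℕ) : F) • T m =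
        ∑ m ∈ Finset.range (q + 1), ((m + 1 : ℕ) : F) • T m := by
      rw [Finset.sum_range_succ, CharP.cast_eq_zero F (q + 1), zero_smul, add_zero]
    rw [h3, h4]
    simp only [Nat.cast_add, Nat.cast_one, add_smul, one_smul, Finset.sum_add_distrib]
    abel
  · change X * _ = _ * X
    rw [Finset.mul_sum, Finset.sum_mul, Finset.sum_range_succ,
      Finset.sum_range_succ' (fun a => T a * X)]
    have h1 : X * T q = 0 := by
      simp only [hT, ← mul_assoc, ← pow_succ', hX, zero_mul]
    have h2 : T 0 * X = 0 := by
      simp only [hT, mul_assoc, Nat.sub_zero, ← pow_succ, hX, mul_zero]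
    rw [h1, h2]
    congr 1
    refine Finset.sum_congr rfl fun m hm => ?_
    have := Finset.mem_range.mp hm
    simp only [hT]
    rw [mul_assoc (X ^ (m + 1) * E), ← pow_succ, show q - (m + 1) + 1 = q - m by omega,
      pow_succ', mul_assoc, mul_assoc, mul_assoc]
  · rw [Finset.mul_sum]
    refine Finset.sum_congr rfl fun m hm => ?_
    have h := hPE m (Finset.mem_range.mp hm)
    calc _ = ((∑ a ∈ Finset.range (q + 1), T a) * X ^ m * E) * X ^ (q - m) := by
          simp only [hT, mul_assoc]
      _ = _ := by rw [h]

lemma weyl_of_commutator {R : Type} [Ring R] {A B D D' : R} (hBA : B * A = A * B + D)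
    (hD' : D * D' = 1) (hAD' : D' * A = A * D') : A * -(B * D') - -(B * D') * A = 1 := by
  have e : A * -(B * D') - -(B * D') * A = (B * A - A * B) * D' := by
    rw [sub_mul, mul_assoc B A, ← hAD']
    simp only [mul_neg, neg_mul, mul_assoc]
    abel
  rw [e, hBA, add_sub_cancel_left, hD']

/-- If `V` splits over `F[X]/(X ^ p)` as a free module, generated by `j (C)`, and a complement of
dimension at most `p - 2`, then `X` acts freely on the `(p - 1)`-forms. With `Y`, `P` as in
`free_part`, `altDer P` is invertible and commutes with `altDer X`, so that
`Z = -(altDer Y) (altDer P)⁻¹` satisfies the Weyl relation with `altDer X`. -/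
lemma actsFreely_altDer [FiniteDimensional F V] {C : Type} [AddCommGroup C] [Module F C]
    [FiniteDimensional F C] (p : ℕ) [Fact p.Prime] [CharP F p]
    (X : Module.End F V) (hX : X ^ p = 0) (j : C →ₗ[F] V) (θ : V →ₗ[F] C)
    (h0 : ∀ a, a + 1 < p → ∀ c, θ ((X ^ a) (j c)) = 0) (h1 : ∀ c, θ ((X ^ (p - 1)) (j c)) = c)
    (hdim : Module.finrank F V + 2 ≤ p * Module.finrank F C + p) :
    ActsFreely p (altDer X : Module.End F (V [⋀^Fin (p - 1)]→ₗ[F] F)) := by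
  have hp : p.Prime := Fact.out
  have hp2 := hp.two_le
  obtain ⟨Y, P, hY, hXP, hPP, hPE⟩ := free_part p X (j ∘ₗ θ) hX
    (fun c hc => LinearMap.ext fun v => by simp [h0 c hc])
    (LinearMap.ext fun v => by simp [h1])
  have hker : Module.finrank F (LinearMap.ker P) < p - 1 := by
    let s : (Fin p → C) →ₗ[F] V := ∑ i : Fin p, (X ^ (i : ℕ)) ∘ₗ j ∘ₗ LinearMap.proj i
    have hs (v) : s v = ∑ i : Fin p, (X ^ (i : ℕ)) (j (v i)) := by
      simp [s, LinearMap.sum_apply]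
    have hinj : Function.Injective s := by
      refine Function.LeftInverse.injective
        (g := fun d (i : Fin p) => θ ((X ^ (p - 1 - (i : ℕ))) d)) ?_
      intro v
      funext i
      change θ ((X ^ (p - 1 - (i : ℕ))) (s v)) = v i
      rw [hs, map_sum, map_sum, Finset.sum_eq_single i]
      · rw [← Module.End.mul_apply, ← pow_add, show p - 1 - (i : ℕ) + i = p - 1 by omega, h1]
      · intro b _ hb
        rw [← Module.End.mul_apply, ← pow_add]
        have hb' : (b : ℕ) ≠ i := fun e => hb (Fin.ext e)
        rcases lt_or_gt_of_ne hb' with h | h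
        · exact h0 _ (by omega) _
        · rw [show p - 1 - (i : ℕ) + b = p + (b - i - 1) by omega, pow_add, hX]
          simp
      · simp
    have hrange : LinearMap.range s ≤ LinearMap.range P := by
      rintro _ ⟨v, rfl⟩
      rw [hs]
      refine Submodule.sum_mem _ fun i _ => ⟨(X ^ (i : ℕ)) (j (v i)), ?_⟩
      have := LinearMap.congr_fun (hPE i i.2) ((X ^ (p - 1)) (j (v i)))
      simpa [h1] using this
    have e1 := Submodule.finrank_mono hrange
    rw [LinearMap.finrank_range_of_inj hinj, Module.finrank_pi_fintype, Finset.sum_const,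
      Finset.card_univ, Fintype.card_fin, smul_eq_mul] at e1
    have e2 := P.finrank_range_add_finrank_ker
    omega
  have hPinj := altDer_idempotent_injective p (by omega : p - 1 < p) P hPP hker
  set A : Module.End F (V [⋀^Fin (p - 1)]→ₗ[F] F) := altDer X with hA
  set B : Module.End F (V [⋀^Fin (p - 1)]→ₗ[F] F) := altDer Y with hB
  set D : Module.End F (V [⋀^Fin (p - 1)]→ₗ[F] F) := altDer P with hD
  have hu : IsUnit D := (LinearMap.isUnit_iff_ker_eq_bot D).mpr (LinearMap.ker_eq_bot.mpr hPinj)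
  obtain ⟨D', hD'⟩ := hu.exists_right_inv
  have hD'' : D' * D = 1 := by
    obtain ⟨u, hu⟩ := hu
    rw [← hu] at hD' ⊢
    rw [← Units.inv_eq_of_mul_eq_one_right hD', Units.inv_mul]
  have hBA : B * A = A * B + D := by
    have := altDer_commutator (n := p - 1) Y X
    rwa [hY, add_sub_cancel_left] at this
  have hAD : Commute A D := altDer_commute hXP
  have hAD' : D' * A = A * D' := by
    calc D' * A = D' * (A * D) * D' := by rw [mul_assoc, mul_assoc, hD', mul_one]
      _ = D' * (D * A) * D' := by rw [hAD.eq]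
      _ = A * D' := by rw [← mul_assoc, hD'', one_mul]
  have key := weyl_of_commutator (R := Module.End F (V [⋀^Fin (p - 1)]→ₗ[F] F)) hBA hD' hAD'
  exact actsFreely_of_weyl p A (-(B * D')) (altDer_pow_char p X hX) key

end Criteria

/-! ### The module `Heart` -/

section Module

variable (F : Type) [Field F] (p k : ℕ) [hp : Fact p.Prime]

/-- The permutation module `⨁_{i<k} F[x]/(x ^ p)`, organised by the degree in `x`: a vector is
a family of `p` levels, each in `F ^ k`. -/
abbrev Lev : Type := Fin p → Fin k → F

variable {F k}

/-- Multiplication by `∑ i, α_i x_i`: raises the level by one and multiplies it by `α`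
coordinatewise. -/
def shiftOp (α : Fin k → F) : Module.End F (Lev F p k) where
  toFun v n := if (n : ℕ) = 0 then 0 else α * v ⟨n - 1, by omega⟩
  map_add' v w := by
    funext n
    simp only [Pi.add_apply]
    split_ifs <;> simp [mul_add]
  map_smul' c v := by
    funext n
    simp only [Pi.smul_apply, RingHom.id_apply]
    split_ifs <;> simp

omit hp in
lemma shiftOp_apply (α : Fin k → F) (v : Lev F p k) (n : Fin p) :
    shiftOp p α v n = if (n : ℕ) = 0 then 0 else α * v ⟨n - 1, by omega⟩ := rfl

omit hp in
lemma shiftOp_pow_apply (α : Fin k → F) (a : ℕ) (v : Lev F p k) (n : Fin p) :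
    (shiftOp p α ^ a) v n = if (n : ℕ) < a then 0 else α ^ a * v ⟨n - a, by omega⟩ := by
  induction a generalizing n with
  | zero => simp
  | succ a ih =>
    rw [pow_succ', Module.End.mul_apply, shiftOp_apply]
    by_cases h : (n : ℕ) = 0
    · simp [h]
    · rw [if_neg h, ih]
      by_cases h' : (n : ℕ) < a + 1
      · rw [if_pos h', if_pos (by simp only; omega), mul_zero]
      · rw [if_neg h', if_neg (by simp only; omega), pow_succ', mul_assoc]
        congr 3
        refine Fin.ext ?_
        simp only
        omega

variable (F k)

/-- The augmentation, which sees only level `0`. -/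
def aug : Lev F p k →ₗ[F] F :=
  ∑ i : Fin k, (LinearMap.proj i : (Fin k → F) →ₗ[F] F) ∘ₗ
    (LinearMap.proj ⟨0, hp.out.pos⟩ : Lev F p k →ₗ[F] (Fin k → F))

lemma aug_apply (v : Lev F p k) : aug F p k v = ∑ i, v ⟨0, hp.out.pos⟩ i := by
  simp [aug, LinearMap.sum_apply]

/-- The norm element, i.e. the fixed vector `(1, …, 1)` in the top level. -/
def topVec : LinearMap.ker (aug F p k) :=
  ⟨fun n => if (n : ℕ) = p - 1 then 1 else 0, by
    have := hp.out.two_le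
    rw [LinearMap.mem_ker, aug_apply]
    simp only
    rw [if_neg (by omega)]
    simp⟩

/-- The subquotient `ker (aug) / ⟨topVec⟩` of the permutation module. -/
abbrev Heart : Type := LinearMap.ker (aug F p k) ⧸ Submodule.span F {topVec F p k}

/-- The condition `1 ≤ k` makes `aug` and `topVec` nonzero. -/
lemma finrank_heart (hk : 1 ≤ k) : Module.finrank F (Heart F p k) = k * p - 2 := by
  have h2 := hp.out.two_le
  have h3 := hp.out.pos
  have e1 := (Submodule.span F {topVec F p k}).finrank_quotient_add_finrank
  rw [finrank_span_singleton] at e1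
  · have e2 := Module.Dual.finrank_ker_add_one_of_ne_zero (f := aug F p k) (by
      intro h
      have := LinearMap.congr_fun h (Pi.single ⟨0, h3⟩ (Pi.single ⟨0, hk⟩ 1))
      rw [aug_apply] at this
      simp at this)
    have e3 : Module.finrank F (Lev F p k) = k * p := by
      rw [Module.finrank_pi_fintype]
      simp [mul_comm]
    rw [e3] at e2
    change Module.finrank F (LinearMap.ker (aug F p k) ⧸ Submodule.span F {topVec F p k}) = _
    omega
  · intro h
    have := congrArg (fun v : LinearMap.ker (aug F p k) =>
      (v : Lev F p k) ⟨p - 1, by omega⟩ ⟨0, hk⟩) h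
    simp [topVec] at this

variable {F k}

lemma shiftOp_mem (α : Fin k → F) (v : Lev F p k) :
    shiftOp p α v ∈ LinearMap.ker (aug F p k) := by
  rw [LinearMap.mem_ker, aug_apply]
  refine Finset.sum_eq_zero fun i _ => ?_
  rw [shiftOp_apply, if_pos rfl]
  rfl

/-- The operator induced by `shiftOp` on the subquotient. -/
def heartOp (α : Fin k → F) : Module.End F (Heart F p k) :=
  Submodule.mapQ _ _ ((shiftOp p α).restrict fun v _ => shiftOp_mem p α v) (by
    rw [Submodule.span_le, Set.singleton_subset_iff]
    have h : (shiftOp p α).restrict (fun v _ => shiftOp_mem p α v) (topVec F p k) = 0 := by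
      ext1
      funext n
      change shiftOp p α _ n = 0
      rw [shiftOp_apply]
      split_ifs with h
      · rfl
      · have : (n : ℕ) - 1 ≠ p - 1 := by omega
        simp [topVec, this]
    change _ ∈ Submodule.span F {topVec F p k}
    rw [h]
    exact zero_mem _)

lemma heartOp_mk (α : Fin k → F) (v : LinearMap.ker (aug F p k)) :
    heartOp p α (Submodule.Quotient.mk v) =
      Submodule.Quotient.mk ⟨shiftOp p α v, shiftOp_mem p α v⟩ := rfl

lemma heartOp_pow_mk (α : Fin k → F) (a : ℕ) (v : LinearMap.ker (aug F p k)) :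
    ∃ w : LinearMap.ker (aug F p k), (w : Lev F p k) = (shiftOp p α ^ a) v ∧
      (heartOp p α ^ a) (Submodule.Quotient.mk v) = Submodule.Quotient.mk w := by
  induction a with
  | zero => exact ⟨v, rfl, rfl⟩
  | succ a ih =>
    obtain ⟨w, hw, hw'⟩ := ih
    refine ⟨⟨shiftOp p α w, shiftOp_mem p α w⟩, ?_, ?_⟩
    · rw [pow_succ', Module.End.mul_apply, hw]
    · rw [pow_succ', Module.End.mul_apply, hw', heartOp_mk]

lemma heartOp_pow_char (α : Fin k → F) : heartOp p α ^ p = 0 := by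
  refine LinearMap.ext fun x => ?_
  obtain ⟨v, rfl⟩ := Submodule.Quotient.mk_surjective _ x
  obtain ⟨w, hw, hw'⟩ := heartOp_pow_mk p α p v
  have : w = 0 := by
    ext1
    rw [hw]
    funext n
    rw [shiftOp_pow_apply, if_pos n.2]
    rfl
  rw [hw', this]
  rfl

lemma heartOp_comm (α β : Fin k → F) : Commute (heartOp p α) (heartOp p β) := by
  refine LinearMap.ext fun x => ?_
  obtain ⟨v, rfl⟩ := Submodule.Quotient.mk_surjective _ x
  rw [Module.End.mul_apply, Module.End.mul_apply, heartOp_mk, heartOp_mk, heartOp_mk, heartOp_mk]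
  congr 2
  funext n
  simp only [shiftOp_apply]
  split_ifs
  · rfl
  · simp
  · exact mul_left_comm _ _ _

/-- `heartOp` as a linear map in the coefficients. -/
def heartOpₗ : (Fin k → F) →ₗ[F] Module.End F (Heart F p k) where
  toFun := heartOp p
  map_add' α β := by
    refine LinearMap.ext fun x => ?_
    obtain ⟨v, rfl⟩ := Submodule.Quotient.mk_surjective _ x
    rw [LinearMap.add_apply, heartOp_mk, heartOp_mk, heartOp_mk, ← Submodule.Quotient.mk_add]
    congr 1
    ext1
    funext n
    simp only [shiftOp_apply, Submodule.coe_add, Pi.add_apply]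
    split_ifs <;> simp [add_mul]
  map_smul' c α := by
    refine LinearMap.ext fun x => ?_
    obtain ⟨v, rfl⟩ := Submodule.Quotient.mk_surjective _ x
    rw [LinearMap.smul_apply, RingHom.id_apply, heartOp_mk, heartOp_mk,
      ← Submodule.Quotient.mk_smul]
    congr 1
    ext1
    funext n
    simp only [shiftOp_apply, Submodule.coe_smul, Pi.smul_apply]
    split_ifs <;> simp

lemma heartOp_eq_sum (α : Fin k → F) : heartOp p α = ∑ i, α i • heartOp p (Pi.single i 1) := by
  have := LinearMap.pi_apply_eq_sum_univ (heartOpₗ (F := F) (k := k) p) α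
  refine this.trans (Finset.sum_congr rfl fun i _ => ?_)
  change α i • heartOp p _ = _
  congr 2
  funext j
  simp [Pi.single_apply, eq_comm]

/-- The hypothesis says that `α ^ (p - 1)` maps the augmentation kernel of level `0` injectively to
the top level modulo `topVec`. That kernel therefore generates a free submodule of rank `k - 1`,
whose complement has dimension `(k * p - 2) - (k - 1) * p = p - 2`. -/
lemma heart_free [CharP F p] (hk : 1 ≤ k) (α : Fin k → F)
    (h : ∀ (c : Fin k → F) (l : F), ∑ i, c i = 0 → α ^ (p - 1) * c = l • 1 → c = 0) :
    ActsFreely p (altDer (heartOp p α) :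
      Module.End F (Heart F p k [⋀^Fin (p - 1)]→ₗ[F] F)) := by
  have h2 := hp.out.two_le
  have h3 := hp.out.pos
  let σ : (Fin k → F) →ₗ[F] F := ∑ i, LinearMap.proj i
  have hσ (c) : σ c = ∑ i, c i := by simp [σ, LinearMap.sum_apply]
  let H := LinearMap.ker σ
  let φ : H →ₗ[F] (Fin k → F) ⧸ Submodule.span F {(1 : Fin k → F)} :=
    (Submodule.mkQ _) ∘ₗ (LinearMap.mulLeft F (α ^ (p - 1))) ∘ₗ H.subtype
  have hφ : LinearMap.ker φ = ⊥ := by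
    rw [LinearMap.ker_eq_bot']
    intro c hc
    have hc' : α ^ (p - 1) * (c : Fin k → F) ∈ Submodule.span F {(1 : Fin k → F)} :=
      (Submodule.Quotient.mk_eq_zero _).mp hc
    obtain ⟨l, hl⟩ := Submodule.mem_span_singleton.mp hc'
    exact Subtype.ext (h c l (by rw [← hσ]; exact c.2) hl.symm)
  obtain ⟨ψ, hψ⟩ := φ.exists_leftInverse_of_injective hφ
  let j : H →ₗ[F] Heart F p k := (Submodule.mkQ _) ∘ₗ
    ((LinearMap.single F (fun _ : Fin p => Fin k → F) ⟨0, h3⟩ ∘ₗ H.subtype).codRestrict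
      (LinearMap.ker (aug F p k)) (by
        intro c
        rw [LinearMap.mem_ker, aug_apply]
        have := c.2
        rw [LinearMap.mem_ker, hσ] at this
        simpa using this))
  let θ : Heart F p k →ₗ[F] H := Submodule.liftQ _
    (ψ ∘ₗ (Submodule.mkQ _) ∘ₗ (LinearMap.proj ⟨p - 1, by omega⟩ : Lev F p k →ₗ[F] (Fin k → F)) ∘ₗ
      (LinearMap.ker (aug F p k)).subtype) (by
        rw [Submodule.span_le, Set.singleton_subset_iff]
        change ψ (Submodule.Quotient.mk _) = 0
        rw [(Submodule.Quotient.mk_eq_zero _).mpr, map_zero]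
        refine Submodule.mem_span_singleton.mpr ⟨1, ?_⟩
        simp [topVec])
  have key (a : ℕ) (c : H) : ∃ w : Lev F p k,
      w = (shiftOp p α ^ a) (Pi.single ⟨0, h3⟩ (c : Fin k → F)) ∧
      θ ((heartOp p α ^ a) (j c)) = ψ (Submodule.Quotient.mk (w ⟨p - 1, by omega⟩)) := by
    obtain ⟨w, hw, hw'⟩ := heartOp_pow_mk p α a
      ⟨Pi.single ⟨0, h3⟩ (c : Fin k → F), by
        rw [LinearMap.mem_ker, aug_apply]
        have := c.2
        rw [LinearMap.mem_ker, hσ] at this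
        simpa using this⟩
    refine ⟨w, hw, ?_⟩
    exact congrArg θ hw'
  refine actsFreely_altDer p _ (heartOp_pow_char p α) j θ ?_ ?_ ?_
  · intro a ha c
    obtain ⟨w, hw, hw'⟩ := key a c
    have : w ⟨p - 1, by omega⟩ = 0 := by
      rw [hw, shiftOp_pow_apply, if_neg (by simp only; omega), Pi.single_eq_of_ne, mul_zero]
      intro e
      have := congrArg Fin.val e
      simp only at this
      omega
    rw [hw', this]
    simp
  · intro c
    obtain ⟨w, hw, hw'⟩ := key (p - 1) c
    have : w ⟨p - 1, by omega⟩ = α ^ (p - 1) * (c : Fin k → F) := by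
      rw [hw, shiftOp_pow_apply, if_neg (by simp)]
      congr 1
      have e : (⟨p - 1 - (p - 1), by omega⟩ : Fin p) = ⟨0, h3⟩ := Fin.ext (Nat.sub_self _)
      rw [e, Pi.single_eq_same]
    rw [hw', this]
    exact LinearMap.congr_fun hψ c
  · rw [finrank_heart F p k hk]
    have e := Module.Dual.finrank_ker_add_one_of_ne_zero (f := σ) (by
      intro h
      have := LinearMap.congr_fun h (Pi.single ⟨0, hk⟩ 1)
      rw [hσ] at this
      simp at this)
    rw [Module.finrank_pi, Fintype.card_fin] at e
    change _ ≤ p * Module.finrank F (LinearMap.ker σ) + p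
    have e2 : 2 ≤ k * p := h2.trans (Nat.le_mul_of_pos_left p hk)
    have e3 : k * p = p * Module.finrank F (LinearMap.ker σ) + p := by
      calc k * p = (Module.finrank F (LinearMap.ker σ) + 1) * p := congrArg (· * p) e.symm
        _ = _ := by ring
    omega

/-- The data describe an equivariant retract of dimension `p - 1`, with one basis vector in each of
the levels `0, …, p - 2`: `c n` spans the `n`-th level of the retract and `g n` is the functional
projecting to it. The operator maps `c n` to `ε • c (n + 1)`, and `c (p - 2)` into the line of
`topVec`. -/
lemma heart_not_free [CharP F p] (α : Fin k → F) (c g : ℕ → Fin k → F) (ε l : F)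
    (hc0 : ∑ i, c 0 i = 0) (hc : ∀ n, n + 2 < p → α * c n = ε • c (n + 1))
    (hc1 : α * c (p - 2) = l • 1) (hg : ∀ n, n + 2 < p → α * g (n + 1) = ε • g n)
    (hcg : ∀ n, n + 1 < p → ∑ i, g n i * c n i = 1) :
    ¬ ActsFreely p (altDer (heartOp p α) :
      Module.End F (Heart F p k [⋀^Fin (p - 1)]→ₗ[F] F)) := by
  have h2 := hp.out.two_le
  let N : Module.End F (Fin (p - 1) → F) :=
    { toFun := fun u n => if (n : ℕ) = 0 then 0 else ε * u ⟨n - 1, by omega⟩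
      map_add' := fun u v => by
        funext n
        simp only [Pi.add_apply]
        split_ifs <;> simp [mul_add]
      map_smul' := fun r v => by
        funext n
        simp only [Pi.smul_apply, RingHom.id_apply]
        split_ifs <;> simp [mul_left_comm] }
  have hN (u) (n : Fin (p - 1)) :
    N u n = if (n : ℕ) = 0 then 0 else ε * u ⟨n - 1, by omega⟩ := rfl
  have hNpow (a : ℕ) : ∀ (u) (n : Fin (p - 1)), (n : ℕ) < a → (N ^ a) u n = 0 := by
    induction a with
    | zero => intro u n h; omega
    | succ a ih =>
      intro u n h
      rw [pow_succ', Module.End.mul_apply, hN]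
      split_ifs with h'
      · rfl
      · rw [ih u _ (by simp only; omega), mul_zero]
  let s0 : (Fin (p - 1) → F) →ₗ[F] Lev F p k :=
    { toFun := fun u n => if h : (n : ℕ) < p - 1 then u ⟨n, h⟩ • c n else 0
      map_add' := fun u v => by
        funext n
        by_cases h : (n : ℕ) < p - 1 <;> simp [h, add_smul]
      map_smul' := fun r v => by
        funext n
        by_cases h : (n : ℕ) < p - 1 <;> simp [h, mul_smul] }
  have hs0 (u) (n : Fin p) : s0 u n = if h : (n : ℕ) < p - 1 then u ⟨n, h⟩ • c n else 0 := rfl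
  have hs0' (u) : s0 u ∈ LinearMap.ker (aug F p k) := by
    rw [LinearMap.mem_ker, aug_apply, hs0]
    rw [dif_pos (by simp only; omega)]
    simp [← Finset.mul_sum, hc0]
  let s : (Fin (p - 1) → F) →ₗ[F] Heart F p k :=
    (Submodule.mkQ _) ∘ₗ s0.codRestrict (LinearMap.ker (aug F p k)) hs0'
  have hs (u) : s u = Submodule.Quotient.mk ⟨s0 u, hs0' u⟩ := rfl
  let f0 : Lev F p k →ₗ[F] (Fin (p - 1) → F) :=
    { toFun := fun v n => ∑ i, g n i * v ⟨n, by omega⟩ i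
      map_add' := fun u v => by
        funext n
        simp [mul_add, Finset.sum_add_distrib]
      map_smul' := fun r v => by
        funext n
        simp [mul_left_comm, Finset.mul_sum] }
  have hf0 (v) (n : Fin (p - 1)) : f0 v n = ∑ i, g n i * v ⟨n, by omega⟩ i := rfl
  let f : Heart F p k →ₗ[F] (Fin (p - 1) → F) := Submodule.liftQ _
    (f0 ∘ₗ (LinearMap.ker (aug F p k)).subtype) (by
      rw [Submodule.span_le, Set.singleton_subset_iff]
      change f0 _ = 0
      funext n
      rw [hf0]
      have : (n : ℕ) ≠ p - 1 := by omega
      simp [topVec, this])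
  have hf (v) : f (Submodule.Quotient.mk v) = f0 v := rfl
  refine not_actsFreely_altDer p _ (heartOp_pow_char p α) s f N ?_ ?_ ?_ ?_
  · refine LinearMap.ext fun u => ?_
    funext n
    exact hNpow p u n (by omega)
  · refine LinearMap.ext fun u => ?_
    change heartOp p α (s u) = s (N u)
    rw [hs, hs, heartOp_mk, Submodule.Quotient.eq]
    -- the two sides differ only in the top level
    refine Submodule.mem_span_singleton.mpr ⟨u ⟨p - 2, by omega⟩ * l, ?_⟩
    ext1
    funext n
    change (u ⟨p - 2, by omega⟩ * l) • (topVec F p k : Lev F p k) n =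
      shiftOp p α (s0 u) n - s0 (N u) n
    have ht : (topVec F p k : Lev F p k) n = if (n : ℕ) = p - 1 then 1 else 0 := rfl
    rw [ht, shiftOp_apply, hs0, hs0]
    by_cases hn0 : (n : ℕ) = 0
    · have : (n : ℕ) ≠ p - 1 := by omega
      have h' : (n : ℕ) < p - 1 := by omega
      rw [if_neg this, if_pos hn0, dif_pos h', hN, if_pos hn0]
      simp
    · have h1 : (n : ℕ) - 1 < p - 1 := by omega
      rw [if_neg hn0, dif_pos h1]
      by_cases hn : (n : ℕ) = p - 1
      · rw [if_pos hn, dif_neg (by omega), sub_zero, mul_smul_comm]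
        have e : (n : ℕ) - 1 = p - 2 := by omega
        simp only [e]
        rw [hc1, smul_smul]
      · have h' : (n : ℕ) < p - 1 := by omega
        rw [if_neg hn, dif_pos h', hN, if_neg hn0, mul_smul_comm]
        simp only
        rw [hc _ (by omega), show (n : ℕ) - 1 + 1 = n by omega, smul_smul, mul_comm ε, sub_self,
          smul_zero]
  · refine LinearMap.ext fun x => ?_
    obtain ⟨v, rfl⟩ := Submodule.Quotient.mk_surjective _ x
    change f (heartOp p α (Submodule.Quotient.mk v)) = N (f (Submodule.Quotient.mk v))
    rw [heartOp_mk, hf, hf]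
    funext n
    rw [hf0, hN, hf0]
    by_cases hn0 : (n : ℕ) = 0
    · rw [if_pos hn0]
      refine Finset.sum_eq_zero fun i _ => ?_
      change g n i * shiftOp p α v ⟨n, by omega⟩ i = 0
      rw [shiftOp_apply, if_pos hn0, Pi.zero_apply, mul_zero]
    · rw [if_neg hn0, Finset.mul_sum]
      refine Finset.sum_congr rfl fun i _ => ?_
      change g n i * shiftOp p α v ⟨n, by omega⟩ i = _
      rw [shiftOp_apply, if_neg hn0, Pi.mul_apply]
      have e := congrFun (hg ((n : ℕ) - 1) (by omega)) i
      rw [show (n : ℕ) - 1 + 1 = n by omega] at e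
      simp only [Pi.mul_apply, Pi.smul_apply, smul_eq_mul] at e
      rw [← mul_assoc, ← mul_assoc, ← e, mul_comm (α i)]
  · refine LinearMap.ext fun u => ?_
    change f (s u) = u
    rw [hs, hf]
    funext n
    change ∑ i, g n i * s0 u ⟨n, by omega⟩ i = u n
    rw [hs0, dif_pos (by simp)]
    have := hcg n (by omega)
    simp only [Pi.smul_apply, smul_eq_mul]
    calc _ = ∑ i, u n * (g n i * c n i) := Finset.sum_congr rfl fun i _ => by ring
      _ = _ := by rw [← Finset.mul_sum, this, mul_one]

end Module

/-! ### Representations from commuting nilpotent operators -/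

section Rep

variable {F M : Type} [Field F] [AddCommGroup M] [Module F M] (p k : ℕ) [Fact p.Prime]

lemma Xop_eq (ρ : Representation F (Multiplicative (Fin k → ZMod p)) M)
    (A : Fin k → Module.End F M) (h : ∀ i, ρ (gens p k i) = 1 + A i) (α : Fin k → F) :
    Xop ρ (gens p k) α = ∑ i, α i • A i := by
  simp [Xop, h]

/-- Commuting operators `A i` with `A i ^ p = 0` define a module over the group algebra of
`(ℤ/pℤ) ^ k`, since `(1 + A i) ^ p = 1` in characteristic `p`. -/
lemma exists_rep [CharP F p] (A : Fin k → Module.End F M) (hA : ∀ i, A i ^ p = 0)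
    (hcomm : ∀ i j, Commute (A i) (A j)) :
    ∃ ρ : Representation F (Multiplicative (Fin k → ZMod p)) M,
      ∀ i, ρ (gens p k i) = 1 + A i := by
  have h2 : 1 < p := (Fact.out : p.Prime).one_lt
  have h1 (i) : (1 + A i) ^ p = 1 := by
    rcases subsingleton_or_nontrivial M with hM | hM
    · exact Subsingleton.elim _ _
    · have : CharP (Module.End F M) p := charP_of_injective_algebraMap
        (FaithfulSMul.algebraMap_injective F (Module.End F M)) p
      rw [add_pow_char_of_commute p (Commute.one_left _), one_pow, hA, add_zero]
  let φ (i : Fin k) : Multiplicative (ZMod p) →* Module.End F M :=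
    { toFun := fun x => (1 + A i) ^ (x.toAdd.val)
      map_one' := by simp
      map_mul' := fun x y => by
        rw [toAdd_mul, ZMod.val_add, ← pow_add]
        exact (pow_eq_pow_mod _ (h1 i)).symm }
  have hφ : Pairwise fun i j => ∀ x y, Commute (φ i x) (φ j y) := fun i j _ x y =>
    (((Commute.one_left _).add_left ((Commute.one_right _).add_right (hcomm i j))).pow_pow _ _)
  let E : Multiplicative (Fin k → ZMod p) →* (Fin k → Multiplicative (ZMod p)) :=
    { toFun := fun x i => Multiplicative.ofAdd (x.toAdd i)
      map_one' := rfl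
      map_mul' := fun x y => rfl }
  refine ⟨(MonoidHom.noncommPiCoprod φ hφ).comp E, fun i => ?_⟩
  have hE : E (gens p k i) = Pi.mulSingle i (Multiplicative.ofAdd 1) := by
    funext j
    change Multiplicative.ofAdd ((Pi.single i (1 : ZMod p) : Fin k → ZMod p) j) = _
    by_cases h : j = i
    · subst h; simp
    · simp [h]
  rw [MonoidHom.comp_apply, hE, MonoidHom.noncommPiCoprod_mulSingle]
  have : Fact (1 < p) := ⟨h2⟩
  change (1 + A i) ^ (1 : ZMod p).val = _
  rw [ZMod.val_one, pow_one]

end Rep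

/-! ### The hypersurface -/

section Hypersurface

variable {F : Type} [Field F] (p k : ℕ)

lemma eval_pk (α : Fin k → F) :
    MvPolynomial.eval α (pk F p k) = ∑ i, ∏ j ∈ Finset.univ.erase i, α j ^ (p - 1) := by
  simp [pk, map_sum, map_prod]

variable {p k}

lemma eval_pk_of_eq_zero {α : Fin k → F} (h2 : 2 ≤ p) {i : Fin k} (hi : α i = 0) :
    MvPolynomial.eval α (pk F p k) = ∏ j ∈ Finset.univ.erase i, α j ^ (p - 1) := by
  rw [eval_pk]
  refine Finset.sum_eq_single i (fun j _ hj => ?_) (fun h => absurd (Finset.mem_univ i) h)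
  refine Finset.prod_eq_zero (i := i) (by simp [hj.symm]) ?_
  rw [hi, zero_pow (by omega)]

lemma eval_pk_of_ne_zero {α : Fin k → F} (h : ∀ i, α i ≠ 0) :
    MvPolynomial.eval α (pk F p k) = (∏ i, α i ^ (p - 1)) * ∑ i, (α i ^ (p - 1))⁻¹ := by
  rw [eval_pk, Finset.mul_sum]
  refine Finset.sum_congr rfl fun i _ => ?_
  rw [← Finset.mul_prod_erase _ _ (Finset.mem_univ i)]
  have := pow_ne_zero (p - 1) (h i)
  field_simp

/-- For `α` outside the hypersurface, `α ^ (p - 1)` satisfies the hypothesis of `heart_free`. If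
all `α i` are nonzero, then `c = l • α ^ (1 - p)`, and the sum of its entries is `l` times a nonzero
multiple of the value of the polynomial. -/
lemma coeff_eq_zero (h2 : 2 ≤ p) {α : Fin k → F} (hα : MvPolynomial.eval α (pk F p k) ≠ 0)
    (c : Fin k → F) (l : F) (hc : ∑ i, c i = 0) (hl : α ^ (p - 1) * c = l • 1) : c = 0 := by
  have hl' (i) : α i ^ (p - 1) * c i = l := by simpa using congrFun hl i
  by_cases h : ∃ i, α i = 0
  · obtain ⟨i, hi⟩ := h
    rw [eval_pk_of_eq_zero h2 hi, Finset.prod_ne_zero_iff] at hα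
    have l0 : l = 0 := by rw [← hl' i, hi, zero_pow (by omega), zero_mul]
    have hj (j) (hj : j ≠ i) : c j = 0 := by
      have := hl' j
      rw [l0] at this
      exact (mul_eq_zero.mp this).resolve_left (hα j (by simp [hj]))
    rw [Finset.sum_eq_single i (fun j _ h => hj j h) (by simp)] at hc
    funext j
    by_cases e : j = i
    · rw [e]; exact hc
    · exact hj j e
  · push Not at h
    rw [eval_pk_of_ne_zero h] at hα
    have hci (i) : c i = l * (α i ^ (p - 1))⁻¹ := by
      rw [← hl' i]
      have := pow_ne_zero (p - 1) (h i)
      field_simp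
    rw [Finset.sum_congr rfl fun i _ => hci i, ← Finset.mul_sum] at hc
    have l0 := (mul_eq_zero.mp hc).resolve_right (right_ne_zero_of_mul hα)
    funext i
    rw [hci, l0, zero_mul]
    rfl

/-- On the hypersurface, either two coordinates of `α` vanish, or none does and the sum of the
`α i ^ (1 - p)` is zero. Then `c n = α ^ (n + 1 - p)` has coordinate sum zero for `n = 0` and ends,
for `n = p - 1`, in the line of `topVec`. -/
lemma heart_not_free_of_eval [Fact p.Prime] [CharP F p] (hk : 1 ≤ k) (α : Fin k → F)
    (hα : MvPolynomial.eval α (pk F p k) = 0) :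
    ¬ ActsFreely p (altDer (heartOp p α) :
      Module.End F (Heart F p k [⋀^Fin (p - 1)]→ₗ[F] F)) := by
  have h2 := (Fact.out : p.Prime).two_le
  by_cases h : ∃ i, α i = 0
  · obtain ⟨i, hi⟩ := h
    rw [eval_pk_of_eq_zero h2 hi, Finset.prod_eq_zero_iff] at hα
    obtain ⟨j, hj, hj'⟩ := hα
    have hji : j ≠ i := by simpa using hj
    replace hj' : α j = 0 := eq_zero_of_pow_eq_zero hj'
    have hz (m : Fin k) (hm : α m = 0) : α * Pi.single m 1 = 0 := by
      funext t
      by_cases e : t = m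
      · subst e; simp [hm]
      · simp [e]
    refine heart_not_free p α (fun _ => Pi.single i 1 - Pi.single j 1) (fun _ => Pi.single i 1)
      0 0 ?_ ?_ ?_ ?_ ?_
    · simp
    · intro n _; rw [mul_sub, hz i hi, hz j hj', sub_zero, zero_smul]
    · rw [mul_sub, hz i hi, hz j hj', sub_zero, zero_smul]
    · intro n _; rw [hz i hi, zero_smul]
    · intro n _
      rw [Finset.sum_eq_single i (fun t _ ht => by simp [ht]) (by simp)]
      simp [hji.symm]
  · push Not at h
    rw [eval_pk_of_ne_zero h] at hα
    have hs := (mul_eq_zero.mp hα).resolve_left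
      (Finset.prod_ne_zero_iff.mpr fun i _ => pow_ne_zero _ (h i))
    refine heart_not_free p α (fun n i => α i ^ n * (α i ^ (p - 1))⁻¹)
      (fun n i => α i ^ (p - 2 - n) * (Pi.single ⟨0, hk⟩ (α ⟨0, hk⟩) : Fin k → F) i)
      1 1 ?_ ?_ ?_ ?_ ?_
    · simpa using hs
    · intro n _
      funext i
      simp only [Pi.mul_apply, one_smul]
      ring
    · funext i
      have := pow_ne_zero (p - 1) (h i)
      simp only [Pi.mul_apply, one_smul, Pi.one_apply]
      rw [← mul_assoc, ← pow_succ', show p - 2 + 1 = p - 1 by omega, mul_inv_cancel₀ this]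
    · intro n hn
      funext i
      simp only [Pi.mul_apply, one_smul]
      rw [← mul_assoc, ← pow_succ', show p - 2 - (n + 1) + 1 = p - 2 - n by omega]
    · intro n hn
      rw [Finset.sum_eq_single ⟨0, hk⟩ (fun t _ ht => by simp [ht]) (by simp)]
      have := pow_ne_zero (p - 1) (h ⟨0, hk⟩)
      rw [Pi.single_eq_same]
      generalize α ⟨0, hk⟩ = a at *
      calc _ = a ^ (p - 2 - n + 1 + n) * (a ^ (p - 1))⁻¹ := by ring
        _ = 1 := by rw [show p - 2 - n + 1 + n = p - 1 by omega, mul_inv_cancel₀ this]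

end Hypersurface

/-- Corollary 5.5: if `p` is odd, `k ≥ 2` and `k ≢ 1 (mod p)`, then there is a
finite-dimensional module over `F[(ℤ/pℤ)^k]` of dimension `C(kp-2, p-1)` with rank variety
the hypersurface `V(p_k)`; consequently `d_{V(p_k)} ≤ C(kp-2, p-1)`. -/
theorem dV_pk_le (F : Type) [Field F] [IsAlgClosed F] (p k : ℕ) [Fact p.Prime] [CharP F p]
    (hp : Odd p) (hk : 2 ≤ k) (hk1 : ¬ k % p = 1 % p) :
    ((k * p - 2).choose (p - 1)) ∈
        dimSet F p k {α : Fin k → F | MvPolynomial.eval α (pk F p k) = 0} ∧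
      sInf (dimSet F p k {α : Fin k → F | MvPolynomial.eval α (pk F p k) = 0}) ≤
        (k * p - 2).choose (p - 1) := by
  have h2 := (Fact.out : p.Prime).two_le
  have hk0 : 1 ≤ k := by omega
  suffices h : ((k * p - 2).choose (p - 1)) ∈
      dimSet F p k {α : Fin k → F | MvPolynomial.eval α (pk F p k) = 0} from
    ⟨h, Nat.sInf_le h⟩
  obtain ⟨ρ, hρ⟩ := exists_rep p k
    (fun i => (altDer (heartOp p (Pi.single i 1)) :
      Module.End F (Heart F p k [⋀^Fin (p - 1)]→ₗ[F] F)))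
    (fun i => altDer_pow_char p _ (heartOp_pow_char p _))
    (fun i j => altDer_commute (heartOp_comm p _ _))
  have hX (α : Fin k → F) : Xop ρ (gens p k) α = altDer (heartOp p α) := by
    rw [Xop_eq p k ρ _ hρ, heartOp_eq_sum p α]
    change _ = altDerₗ (∑ i, α i • heartOp p (Pi.single i 1))
    rw [map_sum]
    exact Finset.sum_congr rfl fun i _ => (map_smul altDerₗ _ _).symm
  refine ⟨_, inferInstance, inferInstance, inferInstance, ρ, ?_, ?_⟩
  · rw [finrank_alternatingMap, finrank_heart F p k hk0]
  · ext α
    change (α = 0 ∨ ¬ ActsFreely p (Xop ρ (gens p k) α)) ↔ MvPolynomial.eval α (pk F p k) = 0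
    rw [hX]
    constructor
    · rintro (rfl | h)
      · rw [eval_pk]
        refine Finset.sum_eq_zero fun i _ => ?_
        obtain ⟨j, hj⟩ := Fintype.exists_ne_of_one_lt_card (by simp; omega) i
        exact Finset.prod_eq_zero (i := j) (by simp [hj])
          (by rw [Pi.zero_apply, zero_pow (by omega)])
      · by_contra hne
        exact h (heart_free p hk0 α fun c l hc hl => coeff_eq_zero h2 hne c l hc hl)
    · intro h
      exact Or.inr (heart_not_free_of_eval hk0 α h)

end
end
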